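/- arXiv:2506.11937 — 3 statements merged into one kernel-verified Lean document; each statement's English description precedes it below -/
import Mathlib

section
/- Let n, m be positive natural numbers and let σ and σ̃ be real n×m matrices such that σσᵀ = σ̃σ̃ᵀ. Then there exists an orthogonal m×m matrix ρ (i.e. ρᵀρ = I) such that σ̃ = σρ. -/
open Matrix

/-!
The hypothesis says that the rows of `σ` and of `σ'` have the same Gram matrix, equivalently
`‖σᵀ x‖ = ‖σ'ᵀ x‖` for all `x`. Hence `σᵀ x ↦ σ'ᵀ x` is a well-defined linear isometry on the
range of `σᵀ`. In finite dimension it extends to a linear isometry of the whole space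
(`LinearIsometry.extend`), whose matrix `Q` is orthogonal and satisfies `Q σᵀ = σ'ᵀ`;
the required factor is `ρ = Qᵀ`.
-/

/-- Linear maps with the same pointwise norms differ by an isometry of the codomain. -/
lemma exists_isometry_comp_eq {E F : Type*} [AddCommGroup E] [Module ℝ E]
    [NormedAddCommGroup F] [InnerProductSpace ℝ F] [FiniteDimensional ℝ F]
    (A B : E →ₗ[ℝ] F) (hAB : ∀ x, ‖A x‖ = ‖B x‖) :
    ∃ L : F →ₗᵢ[ℝ] F, ∀ x, L (A x) = B x := by
  obtain ⟨g, hg⟩ := A.rangeRestrict.exists_rightInverse_of_surjective A.range_rangeRestrict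
  have hAg : ∀ y : LinearMap.range A, A (g y) = y := fun y =>
    congrArg Subtype.val (LinearMap.congr_fun hg y)
  let S : LinearMap.range A →ₗᵢ[ℝ] F :=
    { toLinearMap := B ∘ₗ g
      norm_map' := fun y => by
        change ‖B (g y)‖ = ‖(y : F)‖
        rw [← hAB, hAg] }
  refine ⟨S.extend, fun x => ?_⟩
  have h1 : S.extend (A x) = B (g ⟨A x, x, rfl⟩) :=
    S.extend_apply ⟨A x, x, rfl⟩
  -- The section `g` is irrelevant: `B` vanishes wherever `A` does.
  rw [h1, ← sub_eq_zero, ← map_sub, ← norm_eq_zero, ← hAB, map_sub, hAg, sub_self, norm_zero]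

/-- Two real `n × m` square roots of the same positive semidefinite matrix
differ by an orthogonal factor: if `σ σᵀ = σ' σ'ᵀ` then there is an orthogonal
`m × m` matrix `ρ` (i.e. `ρᵀ ρ = 1`) with `σ' = σ ρ`. -/
theorem square_root_of_matrix_orthogonal_factor
    (n m : ℕ) (hn : 0 < n) (hm : 0 < m)
    (σ σ' : Matrix (Fin n) (Fin m) ℝ)
    (h : σ * σᵀ = σ' * σ'ᵀ) :
    ∃ ρ : Matrix (Fin m) (Fin m) ℝ, ρᵀ * ρ = 1 ∧ σ' = σ * ρ := by
  have key : ∀ (τ : Matrix (Fin n) (Fin m) ℝ) (x : EuclideanSpace ℝ (Fin n)),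
      ‖toEuclideanLin τᵀ x‖ ^ 2 = x.ofLp ⬝ᵥ ((τ * τᵀ) *ᵥ x.ofLp) := by
    intro τ x
    rw [EuclideanSpace.real_norm_sq_eq, ← mulVec_mulVec, dotProduct_mulVec, ← mulVec_transpose]
    simp [dotProduct, toEuclideanLin_apply, sq]
  obtain ⟨L, hL⟩ := exists_isometry_comp_eq (toEuclideanLin σᵀ) (toEuclideanLin σ'ᵀ) (fun x => by
    rw [← sq_eq_sq₀ (norm_nonneg _) (norm_nonneg _), key, key, h])
  obtain ⟨Q, hQ⟩ := (toEuclideanLin (𝕜 := ℝ) (m := Fin m) (n := Fin m)).surjective L.toLinearMap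
  have hQL : ∀ y, toEuclideanLin Q y = L y := fun y => LinearMap.congr_fun hQ y
  have hQσ : Q * σᵀ = σ'ᵀ := by
    apply ext_of_mulVec_single
    intro i
    have h2 := hL (WithLp.toLp 2 (Pi.single i 1))
    rw [← hQL] at h2
    have h3 := congrArg WithLp.ofLp h2
    simpa only [toEuclideanLin_apply, mulVec_mulVec] using h3
  have hQQ : Qᵀ * Q = 1 := by
    ext i j
    have h2 := L.inner_map_map (WithLp.toLp 2 (Pi.single i 1)) (WithLp.toLp 2 (Pi.single j 1))
    rw [← hQL, ← hQL] at h2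
    simpa [toEuclideanLin_apply, PiLp.inner_apply, mul_apply, one_apply, Pi.single_apply,
      mul_comm, eq_comm] using h2
  refine ⟨Qᵀ, ?_, ?_⟩
  · rw [transpose_transpose]
    exact mul_eq_one_comm.mp hQQ
  · rw [← transpose_transpose σ', ← hQσ, transpose_mul, transpose_transpose]
end

section
/- Let n, m be positive natural numbers, D an arbitrary set, and σ, σ' : D → Mat(n,m) two matrix-valued functions. Then the following are equivalent: (i) there exists a function B : D → Mat(m,m) such that for every p ∈ D the matrix B(p) is orthogonal and σ'(p) = σ(p)·B(p)⁻¹; (ii) for every p ∈ D, σ(p)·σ(p)ᵀ = σ'(p)·σ'(p)ᵀ. -/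
open Matrix

/-!
Row `k` of `σ` is a vector of `ℝᵐ`, and `σ σᵀ` is the Gram matrix of the rows. Equality of the
two Gram matrices says exactly that `‖σᵀ x‖ = ‖σ'ᵀ x‖` for all `x`, so `σᵀ x ↦ σ'ᵀ x` is a
well-defined linear isometry on the range of `σᵀ`. It extends to a linear isometry of the whole
of `ℝᵐ` (`LinearIsometry.extend`), whose matrix `B` is orthogonal and satisfies `B σᵀ = σ'ᵀ`, that
is, `σ' = σ Bᵀ = σ B⁻¹`. The converse is a direct computation.
-/

/-- Two linear maps into a finite-dimensional inner product space with pointwise equal norms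
differ by a linear isometry of the target. -/
theorem exists_linearIsometry_comp_eq {E V : Type*} [AddCommGroup E] [Module ℝ E]
    [NormedAddCommGroup V] [InnerProductSpace ℝ V] [FiniteDimensional ℝ V]
    (f g : E →ₗ[ℝ] V) (h : ∀ x, ‖f x‖ = ‖g x‖) :
    ∃ L : V →ₗᵢ[ℝ] V, ∀ x, L (f x) = g x := by
  obtain ⟨s, hs⟩ := f.rangeRestrict.exists_rightInverse_of_surjective f.range_rangeRestrict
  have hs' (y : LinearMap.range f) : f (s y) = y :=
    congrArg Subtype.val (LinearMap.congr_fun hs y)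
  let L₀ : LinearMap.range f →ₗᵢ[ℝ] V :=
    { toLinearMap := g ∘ₗ s
      norm_map' := fun y => by
        change ‖g (s y)‖ = ‖y‖
        rw [← h, hs', Submodule.coe_norm] }
  refine ⟨L₀.extend, fun x => ?_⟩
  have h1 : L₀.extend (f x) = g (s (f.rangeRestrict x)) :=
    L₀.extend_apply (f.rangeRestrict x)
  -- The choice of preimage is irrelevant, because the kernel of `f` is contained in that of `g`.
  rw [h1, ← sub_eq_zero, ← map_sub, ← norm_eq_zero, ← h, map_sub, hs']
  simp

theorem exists_orthogonal_of_mul_transpose_eq {n m : ℕ} (A A' : Matrix (Fin n) (Fin m) ℝ)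
    (h : A * Aᵀ = A' * A'ᵀ) :
    ∃ B : Matrix (Fin m) (Fin m) ℝ, Bᵀ * B = 1 ∧ B * Aᵀ = A'ᵀ := by
  have hnorm (M : Matrix (Fin n) (Fin m) ℝ) (x : EuclideanSpace ℝ (Fin n)) :
      ‖toEuclideanLin Mᵀ x‖ ^ 2 = x.ofLp ⬝ᵥ ((M * Mᵀ) *ᵥ x.ofLp) := by
    rw [EuclideanSpace.real_norm_sq_eq, ← mulVec_mulVec, dotProduct_mulVec, ← mulVec_transpose]
    simp [dotProduct, sq, toLpLin_apply]
  obtain ⟨L, hL⟩ := exists_linearIsometry_comp_eq (toEuclideanLin Aᵀ) (toEuclideanLin A'ᵀ)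
    (fun x => by
      rw [← sq_eq_sq₀ (norm_nonneg _) (norm_nonneg _), hnorm, hnorm, h])
  let B : Matrix (Fin m) (Fin m) ℝ := toEuclideanLin.symm L.toLinearMap
  have hB (x : EuclideanSpace ℝ (Fin m)) : (L x).ofLp = B *ᵥ x.ofLp := by
    have : toEuclideanLin B = L.toLinearMap := LinearEquiv.apply_symm_apply _ _
    have := LinearMap.congr_fun this x
    rw [LinearIsometry.coe_toLinearMap] at this
    rw [← this, toLpLin_apply]
  refine ⟨B, ?_, ?_⟩
  · ext i j
    have hin := L.inner_map_map (EuclideanSpace.single i 1) (EuclideanSpace.single j 1)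
    rw [EuclideanSpace.inner_eq_star_dotProduct, EuclideanSpace.inner_eq_star_dotProduct,
      hB, hB, dotProduct_comm] at hin
    simpa [dotProduct, Matrix.one_apply, mul_apply, Pi.single_apply] using hin
  · refine ext_of_mulVec_single fun k => ?_
    rw [← mulVec_mulVec]
    have hk := congrArg WithLp.ofLp (hL (EuclideanSpace.single k 1))
    rw [hB] at hk
    simpa [toLpLin_apply] using hk

/-- Invariance of the infinitesimal generator under pointwise random rotations:
two diffusion coefficient fields `σ, σ'` on a set `D` are related by a pointwise
orthogonal "gauge" factor (`σ' = σ B⁻¹` with `B` pointwise orthogonal) if and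
only if they have the same pointwise square `σ σᵀ = σ' σ'ᵀ`. -/
theorem gauge_iff_same_generator
    (n m : ℕ) (hn : 0 < n) (hm : 0 < m) (D : Type*)
    (σ σ' : D → Matrix (Fin n) (Fin m) ℝ) :
    (∃ B : D → Matrix (Fin m) (Fin m) ℝ,
        ∀ p : D, (B p)ᵀ * B p = 1 ∧ σ' p = σ p * (B p)⁻¹) ↔
      (∀ p : D, σ p * (σ p)ᵀ = σ' p * (σ' p)ᵀ) := by
  constructor
  · rintro ⟨B, hB⟩ p
    obtain ⟨h1, h2⟩ := hB p
    rw [h2, inv_eq_left_inv h1, transpose_mul, transpose_transpose, Matrix.mul_assoc,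
      ← Matrix.mul_assoc _ (B p), h1, Matrix.one_mul]
  · intro h
    choose B hB hσ using fun p => exists_orthogonal_of_mul_transpose_eq (σ p) (σ' p) (h p)
    refine ⟨B, fun p => ⟨hB p, ?_⟩⟩
    rw [inv_eq_left_inv (hB p), ← transpose_transpose (σ' p), ← hσ p, transpose_mul,
      transpose_transpose]
end

section
/- Let n, m be positive natural numbers. Let Y : ℝⁿ → ℝⁿ and σ : ℝⁿ → Mat(n,m) be differentiable, τ : ℝⁿ → ℝ a function, and C : ℝⁿ → Mat(m,m) a function with C(x)ᵀ = −C(x) for every x (pointwise antisymmetric). Denote by Y(σ)(x) := Σ_k Y_k(x) ∂_k σ(x) the entrywise directional derivative of σ along Y, by D(Y)(x) the n×n Jacobian matrix of Y, and set [Y,σ] := Y(σ) − D(Y)·σ and [Y, σσᵀ] := Y(σσᵀ) − D(Y)·(σσᵀ) − (σσᵀ)·D(Y)ᵀ. If [Y,σ](x) + (1/2)τ(x)σ(x) + σ(x)·C(x) = 0 for every x ∈ ℝⁿ, then [Y, σσᵀ](x) + τ(x)·σ(x)σ(x)ᵀ = 0 for every x ∈ ℝⁿ. -/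
/-!
The operation `Y(·)` is a derivation, so `Y(σσᵀ) = Y(σ) σᵀ + σ Y(σ)ᵀ`. Substituting
`Y(σ) = D(Y) σ - (1/2) τ σ - σ C` from the determining equation, the Jacobian terms cancel,
the two halves of `τ σσᵀ` add up to `τ σσᵀ`, and what remains is `-σ (C + Cᵀ) σᵀ`, which
vanishes because `C` is antisymmetric.
-/

open Matrix

/-- Directional derivative of `f : ℝⁿ → ℝ` in the `k`-th coordinate direction. -/
noncomputable def partialDeriv {n : ℕ} (f : (Fin n → ℝ) → ℝ) (k : Fin n)
    (x : Fin n → ℝ) : ℝ :=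
  fderiv ℝ f x (Pi.single k 1)

/-- Entrywise derivative `Y(σ)(x) = Σ_k Y_k(x) ∂_k σ(x)` of a matrix-valued
field `σ` along a vector field `Y`. -/
noncomputable def vecFieldApply {n : ℕ} {ι : Type*} [Fintype ι]
    (Y : (Fin n → ℝ) → Fin n → ℝ)
    (σ : (Fin n → ℝ) → Matrix (Fin n) ι ℝ) (x : Fin n → ℝ) :
    Matrix (Fin n) ι ℝ :=
  Matrix.of fun i j => ∑ k, Y x k * partialDeriv (fun y => σ y i j) k x

/-- Jacobian matrix `D(Y)(x)` of a vector field `Y : ℝⁿ → ℝⁿ`. -/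
noncomputable def jacobian {n : ℕ} (Y : (Fin n → ℝ) → Fin n → ℝ)
    (x : Fin n → ℝ) : Matrix (Fin n) (Fin n) ℝ :=
  Matrix.of fun i k => partialDeriv (fun y => Y y i) k x

/-- Leibniz rule for the derivative of `σσᵀ` along `Y`. -/
theorem vecFieldApply_mul_transpose {n m : ℕ}
    (Y : (Fin n → ℝ) → Fin n → ℝ)
    (σ : (Fin n → ℝ) → Matrix (Fin n) (Fin m) ℝ)
    (hσ : ∀ i j, Differentiable ℝ fun x => σ x i j) (x : Fin n → ℝ) :
    vecFieldApply Y (fun y => σ y * (σ y)ᵀ) x =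
      vecFieldApply Y σ x * (σ x)ᵀ + σ x * (vecFieldApply Y σ x)ᵀ := by
  ext i j
  have key : ∀ k, partialDeriv (fun y => (σ y * (σ y)ᵀ) i j) k x =
      ∑ l, (partialDeriv (fun y => σ y i l) k x * σ x j l +
        σ x i l * partialDeriv (fun y => σ y j l) k x) := by
    intro k
    have h : HasFDerivAt (fun y => ∑ l, σ y i l * σ y j l)
        (∑ l, (σ x i l • fderiv ℝ (fun y => σ y j l) x +
          σ x j l • fderiv ℝ (fun y => σ y i l) x)) x :=
      HasFDerivAt.fun_sum fun l _ => (hσ i l x).hasFDerivAt.mul (hσ j l x).hasFDerivAt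
    simp only [partialDeriv, Matrix.mul_apply, Matrix.transpose_apply]
    rw [h.fderiv, _root_.sum_apply]
    refine Finset.sum_congr rfl fun l _ => ?_
    simp only [_root_.add_apply, _root_.smul_apply, smul_eq_mul]
    ring
  simp only [vecFieldApply, Matrix.of_apply, Matrix.add_apply, Matrix.mul_apply,
    Matrix.transpose_apply] at key ⊢
  simp only [key, Finset.mul_sum, Finset.sum_mul]
  rw [Finset.sum_comm, ← Finset.sum_add_distrib]
  refine Finset.sum_congr rfl fun l _ => ?_
  rw [← Finset.sum_add_distrib]
  refine Finset.sum_congr rfl fun k _ => ?_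
  ring

/-- Every (weak) symmetry satisfies the `G`-weak determining equation: if
`Y, σ` are differentiable, `C` is pointwise antisymmetric and
`[Y, σ] + (1/2) τ σ + σ C = 0` everywhere, where `[Y, σ] = Y(σ) − D(Y) σ`,
then `[Y, σσᵀ] + τ σσᵀ = 0` everywhere, where
`[Y, σσᵀ] = Y(σσᵀ) − D(Y) σσᵀ − σσᵀ D(Y)ᵀ`. -/
theorem weak_symmetry_implies_G_weak_determining
    (n m : ℕ) (hn : 0 < n) (hm : 0 < m)
    (Y : (Fin n → ℝ) → Fin n → ℝ)
    (σ : (Fin n → ℝ) → Matrix (Fin n) (Fin m) ℝ)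
    (τ : (Fin n → ℝ) → ℝ)
    (C : (Fin n → ℝ) → Matrix (Fin m) (Fin m) ℝ)
    (hY : ∀ i, Differentiable ℝ fun x => Y x i)
    (hσ : ∀ i j, Differentiable ℝ fun x => σ x i j)
    (hC : ∀ x, (C x)ᵀ = -C x)
    (hdet : ∀ x, vecFieldApply Y σ x - jacobian Y x * σ x +
        ((1 / 2 : ℝ) * τ x) • σ x + σ x * C x = 0) :
    ∀ x, vecFieldApply Y (fun y => σ y * (σ y)ᵀ) x -
        jacobian Y x * (σ x * (σ x)ᵀ) -
        (σ x * (σ x)ᵀ) * (jacobian Y x)ᵀ +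
        τ x • (σ x * (σ x)ᵀ) = 0 := by
  intro x
  have hY' : vecFieldApply Y σ x =
      jacobian Y x * σ x - ((1 / 2 : ℝ) * τ x) • σ x - σ x * C x := by
    rw [← sub_eq_zero, ← hdet x]
    abel
  rw [vecFieldApply_mul_transpose Y σ hσ x, hY']
  simp only [Matrix.transpose_sub, Matrix.transpose_mul, Matrix.transpose_smul, hC,
    Matrix.sub_mul, Matrix.mul_sub, Matrix.smul_mul, Matrix.mul_smul, Matrix.neg_mul,
    Matrix.mul_neg, Matrix.mul_assoc]
  module
end
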